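/- Let G = ⟨H, t | t⁻¹ x t = x for x ∈ X⟩ be an HNN extension over a central subgroup X of H, fix k ∈ H \ X, and for each natural number q ≥ 1 set [q] = t^q k t^{-q} ∈ G. Then for distinct positive integers p ≠ q, the element [p]⁻¹[q] does not lie in the image of H in G; more generally, any product [p₁]⁻¹[q₁][p₂]⁻¹[q₂]⋯[p_m]⁻¹[q_m] with m ≥ 1, pᵢ ≠ qᵢ for all i, and qᵢ ≠ p_{i+1} for all i < m, does not lie in the image of H. -/

import Mathlib

/-!
Merging adjacent powers of `t` in the product leaves the exponents `qᵢ - pᵢ` and `pᵢ₊₁ - qᵢ`, all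
nonzero, between successive occurrences of `k⁻¹` and `k`. As `k` lies in neither associated
subgroup, no pinch occurs, and Britton's lemma applies. The exponents at the two ends may vanish,
but `q₁ - p₁` remains, so `t` does occur.
-/

theorem exists_zpow_eq_zpow_units_pow_succ {M : Type*} [Group M] (a : M) {n : ℤ} (hn : n ≠ 0) :
    ∃ (u : ℤˣ) (j : ℕ), a ^ n = (a ^ (u : ℤ)) ^ (j + 1) := by
  obtain ⟨u, hu⟩ := (Int.associated_natAbs n).symm
  obtain ⟨j, hj⟩ := Nat.exists_eq_succ_of_ne_zero (Int.natAbs_ne_zero.2 hn)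
  refine ⟨u, j, ?_⟩
  rw [← zpow_natCast, ← zpow_mul, ← hu, hj, mul_comm]

section

open HNNExtension HNNExtension.NormalWord

variable {G : Type*} [Group G] {A B : Subgroup G} {φ : A ≃* B}

/-- `StartsWith u x` says that `x` is the product of a reduced word with trivial head whose first
letter is `t ^ u`. The letter is recorded because it decides which elements can be
prepended to the word without creating a pinch. -/
def StartsWith (u : ℤˣ) (x : HNNExtension G A B φ) : Prop :=
  ∃ w : ReducedWord G A B, w.head = 1 ∧ w.toList.head?.map Prod.fst = some u ∧ w.prod φ = x

theorem startsWith_zpow_mul_of (u : ℤˣ) (g : G) :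
    StartsWith u (t ^ (u : ℤ) * of g : HNNExtension G A B φ) :=
  ⟨⟨1, [(u, g)], List.isChain_singleton _⟩, rfl, rfl, by simp [ReducedWord.prod]⟩

namespace StartsWith

variable {u v : ℤˣ} {g : G} {x : HNNExtension G A B φ}

theorem notMem_range (hx : StartsWith u x) :
    x ∉ (of : G →* HNNExtension G A B φ).range := by
  obtain ⟨w, -, hw, rfl⟩ := hx
  intro h
  simp [ReducedWord.toList_eq_nil_of_mem_of_range φ w h] at hw

theorem zpow_mul_of_mul (hx : StartsWith v x) (huv : g ∈ toSubgroup A B u → u = v) :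
    StartsWith u (t ^ (u : ℤ) * of g * x) := by
  obtain ⟨w, hhead, hw, rfl⟩ := hx
  refine ⟨⟨1, (u, g) :: w.toList, List.isChain_cons.2 ⟨fun a ha hg ↦ ?_, w.chain⟩⟩, rfl, rfl, ?_⟩
  · have hav : a.1 = v := by simpa [Option.mem_def.1 ha] using hw
    exact (huv hg).trans hav.symm
  · simp [ReducedWord.prod, hhead]

theorem zpow_pow_mul (hx : StartsWith u x) (j : ℕ) :
    StartsWith u ((t ^ (u : ℤ)) ^ j * x) := by
  induction j with
  | zero => simpa using hx
  | succ j ih => simpa [pow_succ', mul_assoc] using ih.zpow_mul_of_mul (g := 1) fun _ ↦ rfl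

end StartsWith

theorem exists_startsWith_zpow_mul_of {n : ℤ} (hn : n ≠ 0) (g : G) :
    ∃ u, StartsWith u (t ^ n * of g : HNNExtension G A B φ) := by
  obtain ⟨u, j, hj⟩ := exists_zpow_eq_zpow_units_pow_succ (t : HNNExtension G A B φ) hn
  refine ⟨u, ?_⟩
  simpa only [hj, pow_succ, mul_assoc] using (startsWith_zpow_mul_of u g).zpow_pow_mul j

theorem StartsWith.exists_zpow_mul_of_mul {v : ℤˣ} {x : HNNExtension G A B φ}
    (hx : StartsWith v x) {n : ℤ} (hn : n ≠ 0) {g : G} (hA : g ∉ A) (hB : g ∉ B) :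
    ∃ u, StartsWith u (t ^ n * of g * x) := by
  obtain ⟨u, j, hj⟩ := exists_zpow_eq_zpow_units_pow_succ (t : HNNExtension G A B φ) hn
  have hg : g ∉ toSubgroup A B u := by
    rcases Int.units_eq_one_or u with rfl | rfl <;> assumption
  refine ⟨u, ?_⟩
  simpa only [hj, pow_succ, mul_assoc] using
    (hx.zpow_mul_of_mul fun h ↦ absurd h hg).zpow_pow_mul j

theorem StartsWith.zpow_mul_of_mul_notMem_range {v : ℤˣ} {x : HNNExtension G A B φ}
    (hx : StartsWith v x) (n : ℤ) {g : G} (hA : g ∉ A) (hB : g ∉ B) :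
    t ^ n * of g * x ∉ (of : G →* HNNExtension G A B φ).range := by
  rcases eq_or_ne n 0 with rfl | hn
  · rw [zpow_zero, one_mul, Subgroup.mul_mem_cancel_left _ (MonoidHom.mem_range.2 ⟨g, rfl⟩)]
    exact hx.notMem_range
  · obtain ⟨u, hu⟩ := hx.exists_zpow_mul_of_mul hn hA hB
    exact hu.notMem_range

variable (φ) in
/-- The conjugate `[n] = t ^ n * k * t ^ (-n)` of a base element `k` by a power of the stable
letter, for an arbitrary integer `n`. -/
def stableConj (k : G) (n : ℤ) : HNNExtension G A B φ :=
  t ^ n * of k * t ^ (-n)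

variable {k : G}

theorem stableConj_inv_mul_stableConj_mul (p q : ℤ) (x : HNNExtension G A B φ) :
    (stableConj φ k p)⁻¹ * stableConj φ k q * x =
      t ^ p * of k⁻¹ * (t ^ (q - p) * of k * (t ^ (-q) * x)) := by
  simp only [stableConj, map_inv]
  group

theorem zpow_mul_stableConj_inv_mul_stableConj_mul (n p q : ℤ) (x : HNNExtension G A B φ) :
    t ^ n * ((stableConj φ k p)⁻¹ * stableConj φ k q * x) =
      t ^ (n + p) * of k⁻¹ * (t ^ (q - p) * of k * (t ^ (-q) * x)) := by
  rw [stableConj_inv_mul_stableConj_mul, zpow_add]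
  simp only [mul_assoc]

theorem exists_startsWith_prod_stableConj (hA : k ∉ A) (hB : k ∉ B) (a : ℤ × ℤ) (l : List (ℤ × ℤ))
    (hne : ∀ b ∈ a :: l, b.1 ≠ b.2) (hchain : (a :: l).IsChain fun b c ↦ b.2 ≠ c.1) :
    ∃ u, StartsWith u (t ^ (a.2 - a.1) * of k *
      (t ^ (-a.2) * (l.map fun b ↦ (stableConj φ k b.1)⁻¹ * stableConj φ k b.2).prod)) := by
  induction l generalizing a with
  | nil =>
    have ha := sub_ne_zero.2 (hne a List.mem_cons_self).symm
    rw [List.map_nil, List.prod_nil, mul_one]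
    rcases eq_or_ne a.2 0 with h0 | h0
    · simpa [h0] using exists_startsWith_zpow_mul_of ha k
    · obtain ⟨u, hu⟩ := exists_startsWith_zpow_mul_of (φ := φ) (neg_ne_zero.2 h0) 1
      simpa using hu.exists_zpow_mul_of_mul ha hA hB
  | cons b l ih =>
    have ha := sub_ne_zero.2 (hne a List.mem_cons_self).symm
    obtain ⟨hab, hchain⟩ := List.isChain_cons_cons.1 hchain
    have hne := List.forall_mem_of_forall_mem_cons hne
    obtain ⟨v, hv⟩ := ih b hne hchain
    obtain ⟨w, hw⟩ := hv.exists_zpow_mul_of_mul (neg_add_eq_zero.not.2 hab)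
      (mt inv_mem_iff.1 hA) (mt inv_mem_iff.1 hB)
    rw [List.map_cons, List.prod_cons, zpow_mul_stableConj_inv_mul_stableConj_mul]
    exact hw.exists_zpow_mul_of_mul ha hA hB

variable (φ) in
theorem stmt_9_general (hA : k ∉ A) (hB : k ∉ B) {m : ℕ} (hm : 1 ≤ m) (p q : Fin m → ℤ)
    (hpq : ∀ i, p i ≠ q i)
    (hqp : ∀ (i : Fin m) (hi : (i : ℕ) + 1 < m), q i ≠ p ⟨(i : ℕ) + 1, hi⟩) :
    (List.ofFn fun i ↦ (stableConj φ k (p i))⁻¹ * stableConj φ k (q i)).prod ∉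
      (of : G →* HNNExtension G A B φ).range := by
  obtain ⟨m, rfl⟩ := Nat.exists_eq_add_of_le' hm
  have hne : ∀ b ∈ List.ofFn fun i ↦ (p i, q i), b.1 ≠ b.2 :=
    List.forall_mem_ofFn_iff.2 hpq
  have hchain : (List.ofFn fun i ↦ (p i, q i)).IsChain fun b c ↦ b.2 ≠ c.1 :=
    List.isChain_ofFn.2 fun i hi ↦ hqp ⟨i, by lia⟩ hi
  rw [List.ofFn_succ] at hne hchain
  obtain ⟨u, hu⟩ := exists_startsWith_prod_stableConj (φ := φ) hA hB _ _ hne hchain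
  rw [List.map_ofFn] at hu
  rw [List.ofFn_succ, List.prod_cons, stableConj_inv_mul_stableConj_mul]
  exact hu.zpow_mul_of_mul_notMem_range (p 0) (mt inv_mem_iff.1 hA) (mt inv_mem_iff.1 hB)

end

/-- Let `G = ⟨H, t | t⁻¹ x t = x, x ∈ X⟩` with `X` a central subgroup of `H`,
`k ∈ H \ X`, and `[q] = t^q k t^{-q}`. Then any product
`[p₁]⁻¹[q₁][p₂]⁻¹[q₂]⋯[p_m]⁻¹[q_m]` with `m ≥ 1`, `pᵢ ≠ qᵢ` and `qᵢ ≠ p_{i+1}`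
(all `pᵢ, qᵢ ≥ 1`) does not lie in the image of `H`. -/
theorem stmt_9 {H : Type*} [Group H] (X : Subgroup H)
    (hX : X ≤ Subgroup.center H) (k : H) (hk : k ∉ X)
    (m : ℕ) (hm : 1 ≤ m) (p q : Fin m → ℕ)
    (hp : ∀ i, 1 ≤ p i) (hq : ∀ i, 1 ≤ q i)
    (hpq : ∀ i, p i ≠ q i)
    (hqp : ∀ (i : Fin m) (hi : (i : ℕ) + 1 < m), q i ≠ p ⟨(i : ℕ) + 1, hi⟩) :
    (List.ofFn (fun i : Fin m =>
        ((HNNExtension.t : HNNExtension H X X (MulEquiv.refl ↥X)) ^ (p i : ℤ) *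
            HNNExtension.of k * HNNExtension.t ^ (-(p i : ℤ)))⁻¹ *
          (HNNExtension.t ^ (q i : ℤ) * HNNExtension.of k *
            HNNExtension.t ^ (-(q i : ℤ))))).prod ∉
      (HNNExtension.of : H →* HNNExtension H X X (MulEquiv.refl ↥X)).range :=
  stmt_9_general (MulEquiv.refl X) hk hk hm (fun i ↦ p i) (fun i ↦ q i)
    (fun i ↦ mod_cast hpq i) (fun i hi ↦ mod_cast hqp i hi)
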